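/- Consider the augmented error dynamics (see context). Assume the design conditions: L = 0, T = I − H·C, and (I − H·C)·F₂ = 0. Let (u, a_u, a_y, a_c, f₁, f₂, ω) and (ũ, ã_u, ã_y, ã_c, f₁, f̃₂, ω) be two collections of signals sharing the same actuator fault f₁ and the same noise ω, with f₁ and ω continuous. If (e, e_p) solves the augmented error dynamics for the first collection, (ẽ, ẽ_p) solves it for the second collection, and e(0) = ẽ(0), then e(t) = ẽ(t) for all t ≥ 0; in particular the residual C·e(t) = C·ẽ(t) for all t ≥ 0, i.e., the residual is decoupled from u, a_u, a_y, a_c, f₂. -/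

import Mathlib

open Matrix

/-- A pair of differentiable functions `(e, e_p)` solves the augmented error
dynamics (equations (12)-(13) of the paper) for the given signals. -/
def SolvesAugmentedErrorDynamics {N n p m m_a m_f p_f q n_c p_a : ℕ}
    (F : Matrix (Fin N) (Fin N) ℝ) (H : Matrix (Fin N) (Fin p) ℝ)
    (C : Matrix (Fin p) (Fin N) ℝ) (T : Matrix (Fin N) (Fin N) ℝ)
    (B : Matrix (Fin N) (Fin m) ℝ) (B_a : Matrix (Fin N) (Fin m_a) ℝ)
    (F₁ : Matrix (Fin N) (Fin m_f) ℝ) (F₂ : Matrix (Fin N) (Fin p_f) ℝ)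
    (Nw : Matrix (Fin N) (Fin q) ℝ) (L : Matrix (Fin N) (Fin n) ℝ)
    (F_p L_p : Matrix (Fin n) (Fin n) ℝ) (T_p : Matrix (Fin n) (Fin N) ℝ)
    (K_p : Matrix (Fin n) (Fin p) ℝ) (D_a : Matrix (Fin p) (Fin p_a) ℝ)
    (D_ac : Matrix (Fin n) (Fin n_c) ℝ)
    (u : ℝ → Fin m → ℝ) (a_u : ℝ → Fin m_a → ℝ) (a_y : ℝ → Fin p_a → ℝ)
    (a_c : ℝ → Fin n_c → ℝ) (f₁ : ℝ → Fin m_f → ℝ) (f₂ : ℝ → Fin p_f → ℝ)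
    (ω : ℝ → Fin q → ℝ)
    (e : ℝ → Fin N → ℝ) (e_p : ℝ → Fin n → ℝ) : Prop :=
  ∀ t : ℝ,
    HasDerivAt e
      (F.mulVec (e t)
        + ((1 : Matrix (Fin N) (Fin N) ℝ) - T - H * C).mulVec
            (B.mulVec (u t) + B_a.mulVec (a_u t))
        + (((1 : Matrix (Fin N) (Fin N) ℝ) - H * C) * F₁).mulVec (f₁ t)
        + (((1 : Matrix (Fin N) (Fin N) ℝ) - H * C) * F₂).mulVec (f₂ t)
        + (((1 : Matrix (Fin N) (Fin N) ℝ) - H * C) * Nw).mulVec (ω t)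
        - L.mulVec (e_p t) - (L * D_ac).mulVec (a_c t)) t
    ∧ HasDerivAt e_p
      ((F_p + L_p).mulVec (e_p t) + (T_p * B_a).mulVec (a_u t)
        - (K_p * D_a).mulVec (a_y t) - (L_p * D_ac).mulVec (a_c t)) t

theorem eq_of_hasDerivAt_clm_add {E : Type*} [NormedAddCommGroup E] [NormedSpace ℝ E]
    {A : ℝ → E →L[ℝ] E} {K : NNReal} (hA : ∀ t, ‖A t‖₊ ≤ K) {d x y : ℝ → E}
    (hx : ∀ t, HasDerivAt x (A t (x t) + d t) t) (hy : ∀ t, HasDerivAt y (A t (y t) + d t) t)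
    {t₀ : ℝ} (ht₀ : x t₀ = y t₀) : x = y := by
  have lipschitz_field (t : ℝ) : LipschitzWith K fun z => A t z + d t := by
    simpa only [add_zero] using ((A t).lipschitz.weaken (hA t)).add (LipschitzWith.const (d t))
  exact ODE_solution_unique_univ (v := fun t z => A t z + d t) (s := fun _ => Set.univ)
    (fun t => (lipschitz_field t).lipschitzOnWith)
    (fun t => ⟨hx t, Set.mem_univ _⟩) (fun t => ⟨hy t, Set.mem_univ _⟩) ht₀

theorem eq_of_hasDerivAt_mulVec_add {ι : Type*} [Fintype ι] {F : Matrix ι ι ℝ}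
    {d x y : ℝ → ι → ℝ} (hx : ∀ t, HasDerivAt x (F *ᵥ x t + d t) t)
    (hy : ∀ t, HasDerivAt y (F *ᵥ y t + d t) t) {t₀ : ℝ} (ht₀ : x t₀ = y t₀) : x = y :=
  eq_of_hasDerivAt_clm_add (A := fun _ => F.mulVecLin.toContinuousLinearMap)
    (fun _ => le_rfl) hx hy ht₀

section ReducedDynamics

variable {N n p m m_a m_f p_f q n_c p_a : ℕ}
  {F : Matrix (Fin N) (Fin N) ℝ} {H : Matrix (Fin N) (Fin p) ℝ}
  {C : Matrix (Fin p) (Fin N) ℝ} {T : Matrix (Fin N) (Fin N) ℝ}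
  {B : Matrix (Fin N) (Fin m) ℝ} {B_a : Matrix (Fin N) (Fin m_a) ℝ}
  {F₁ : Matrix (Fin N) (Fin m_f) ℝ} {F₂ : Matrix (Fin N) (Fin p_f) ℝ}
  {Nw : Matrix (Fin N) (Fin q) ℝ} {L : Matrix (Fin N) (Fin n) ℝ}
  {F_p L_p : Matrix (Fin n) (Fin n) ℝ} {T_p : Matrix (Fin n) (Fin N) ℝ}
  {K_p : Matrix (Fin n) (Fin p) ℝ} {D_a : Matrix (Fin p) (Fin p_a) ℝ}
  {D_ac : Matrix (Fin n) (Fin n_c) ℝ}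
  {u u' : ℝ → Fin m → ℝ} {a_u a_u' : ℝ → Fin m_a → ℝ} {a_y a_y' : ℝ → Fin p_a → ℝ}
  {a_c a_c' : ℝ → Fin n_c → ℝ} {f₁ : ℝ → Fin m_f → ℝ} {f₂ f₂' : ℝ → Fin p_f → ℝ}
  {ω : ℝ → Fin q → ℝ} {e e' : ℝ → Fin N → ℝ} {e_p e_p' : ℝ → Fin n → ℝ}

theorem SolvesAugmentedErrorDynamics.hasDerivAt_detector_error
    (hsol : SolvesAugmentedErrorDynamics F H C T B B_a F₁ F₂ Nw L F_p L_p T_p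
      K_p D_a D_ac u a_u a_y a_c f₁ f₂ ω e e_p)
    (hL : L = 0) (hT : T = 1 - H * C) (hF₂ : (1 - H * C) * F₂ = 0) (t : ℝ) :
    HasDerivAt e
      (F *ᵥ e t + (((1 - H * C) * F₁) *ᵥ f₁ t + ((1 - H * C) * Nw) *ᵥ ω t)) t := by
  have input_gain_eq_zero : 1 - T - H * C = 0 := by rw [hT]; abel
  simpa only [input_gain_eq_zero, hF₂, hL, Matrix.zero_mul, zero_mulVec, add_zero, sub_zero,
    add_assoc] using (hsol t).1

theorem actuator_fault_residual_decoupled_general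
    (hL : L = 0) (hT : T = 1 - H * C) (hF₂ : (1 - H * C) * F₂ = 0)
    (hsol : SolvesAugmentedErrorDynamics F H C T B B_a F₁ F₂ Nw L F_p L_p T_p
      K_p D_a D_ac u a_u a_y a_c f₁ f₂ ω e e_p)
    (hsol' : SolvesAugmentedErrorDynamics F H C T B B_a F₁ F₂ Nw L F_p L_p T_p
      K_p D_a D_ac u' a_u' a_y' a_c' f₁ f₂' ω e' e_p')
    {t₀ : ℝ} (ht₀ : e t₀ = e' t₀) : e = e' :=
  eq_of_hasDerivAt_mulVec_add (hsol.hasDerivAt_detector_error hL hT hF₂)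
    (hsol'.hasDerivAt_detector_error hL hT hF₂) ht₀

end ReducedDynamics

/-- Proposition 3 (decoupling of the residual res_AF): under the design
conditions L = 0, T = I - H C, (I - H C) F₂ = 0, two solutions of the augmented
error dynamics sharing the same (continuous) actuator fault f₁ and noise ω,
with the same initial detector error, have identical detector errors for all
t ≥ 0; in particular the residual C·e is decoupled from u, a_u, a_y, a_c, f₂. -/
theorem actuator_fault_residual_decoupled {N n p m m_a m_f p_f q n_c p_a : ℕ}
    (F : Matrix (Fin N) (Fin N) ℝ) (H : Matrix (Fin N) (Fin p) ℝ)
    (C : Matrix (Fin p) (Fin N) ℝ) (T : Matrix (Fin N) (Fin N) ℝ)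
    (B : Matrix (Fin N) (Fin m) ℝ) (B_a : Matrix (Fin N) (Fin m_a) ℝ)
    (F₁ : Matrix (Fin N) (Fin m_f) ℝ) (F₂ : Matrix (Fin N) (Fin p_f) ℝ)
    (Nw : Matrix (Fin N) (Fin q) ℝ) (L : Matrix (Fin N) (Fin n) ℝ)
    (F_p L_p : Matrix (Fin n) (Fin n) ℝ) (T_p : Matrix (Fin n) (Fin N) ℝ)
    (K_p : Matrix (Fin n) (Fin p) ℝ) (D_a : Matrix (Fin p) (Fin p_a) ℝ)
    (D_ac : Matrix (Fin n) (Fin n_c) ℝ)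
    (hL : L = 0)
    (hT : T = (1 : Matrix (Fin N) (Fin N) ℝ) - H * C)
    (hF₂ : ((1 : Matrix (Fin N) (Fin N) ℝ) - H * C) * F₂ = 0)
    (u u' : ℝ → Fin m → ℝ) (a_u a_u' : ℝ → Fin m_a → ℝ)
    (a_y a_y' : ℝ → Fin p_a → ℝ) (a_c a_c' : ℝ → Fin n_c → ℝ)
    (f₁ : ℝ → Fin m_f → ℝ) (f₂ f₂' : ℝ → Fin p_f → ℝ)
    (ω : ℝ → Fin q → ℝ)
    (hf₁_cont : Continuous f₁) (hω_cont : Continuous ω)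
    (e e' : ℝ → Fin N → ℝ) (e_p e_p' : ℝ → Fin n → ℝ)
    (hsol : SolvesAugmentedErrorDynamics F H C T B B_a F₁ F₂ Nw L F_p L_p T_p
      K_p D_a D_ac u a_u a_y a_c f₁ f₂ ω e e_p)
    (hsol' : SolvesAugmentedErrorDynamics F H C T B B_a F₁ F₂ Nw L F_p L_p T_p
      K_p D_a D_ac u' a_u' a_y' a_c' f₁ f₂' ω e' e_p')
    (h0 : e 0 = e' 0) :
    ∀ t : ℝ, 0 ≤ t → e t = e' t :=
  fun t _ => congrFun (actuator_fault_residual_decoupled_general hL hT hF₂ hsol hsol' h0) t
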